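/- There exists δ > 0, depending only on γ, R, T∞, θ and ε, such that whenever φ_b ∈ (0, δ], the coefficient functions satisfy, for every x₁ ≥ 0: q₁(x₁) > 0, q₃(x₁) > 0, q₄(x₁) > 0, q₂(x₁)² − 4q₁(x₁)q₃(x₁) < 0, and q₅(x₁)² − 4q₃(x₁)q₄(x₁) < 0. -/

import Mathlib

noncomputable def Bfun (β x : ℝ) : ℝ := x + β⁻¹

noncomputable def Sfun (β Γ φb x : ℝ) : ℝ :=
  (x + β⁻¹) / (x + Γ⁻¹ * (Real.sqrt φb)⁻¹)

noncomputable def q1 (γ R T Γ ε β φb x : ℝ) : ℝ :=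
  (ε / 2) * R * T +
    (((1 - R * T) * ε / 2) * (Sfun β Γ φb x) ^ 2
      - (Γ ^ 2 / 2) * ε * (ε - 1) * (ε - 2)
      + (γ * R * T - 1) * (Sfun β Γ φb x) ^ 3) / ((Bfun β x) ^ 2 * Γ ^ 2)

noncomputable def q2 (γ R T Γ ε β φb x : ℝ) : ℝ :=
  -(R * T * ε) +
    (2 * ε * R * T * (Sfun β Γ φb x) ^ 2
      + 2 * (1 - γ * R * T) * (Sfun β Γ φb x) ^ 3) / ((Bfun β x) ^ 2 * Γ ^ 2)

noncomputable def q3 (γ R T Γ ε β φb x : ℝ) : ℝ :=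
  (ε / 2) * γ * R * T +
    (((1 - R * T) * ε / 2) * (Sfun β Γ φb x) ^ 2
      + (3 * γ * R * T + 3) * (Sfun β Γ φb x) ^ 3) / ((Bfun β x) ^ 2 * Γ ^ 2)

noncomputable def q4 (γ R T Γ ε β φb x : ℝ) : ℝ :=
  ε * R / (2 * (γ - 1) * T) +
    (-(ε * R / (2 * (γ - 1) * T)) * (Sfun β Γ φb x) ^ 2
      + (γ * R / ((γ - 1) * T)) * (Sfun β Γ φb x) ^ 3) / ((Bfun β x) ^ 2 * Γ ^ 2)

noncomputable def q5 (γ R T Γ ε β φb x : ℝ) : ℝ :=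
  -(ε * R) + 2 * ε * R * (Sfun β Γ φb x) ^ 2 / ((Bfun β x) ^ 2 * Γ ^ 2)

/-!
Let `D = B²Γ²`. Each `qᵢ` is a constant plus a polynomial in `S` divided by `D`. The bounds
`θ ≤ β / (Γ √φ_b) ≤ 1` confine `S` to the compact interval `[1, θ⁻¹]`, and `D ≥ φ_b⁻¹`, so
as `φ_b → 0` each `qᵢ` tends to its constant, uniformly in `x₁ ≥ 0` and in the admissible `β`.
The constants satisfy `q₃ > 0` and have discriminants `-(γ - 1) (RTε)²` and `-(Rε)² / (γ - 1)`,
which are negative. Given `q₃ > 0`, a negative discriminant forces `q₁ > 0` and `q₄ > 0`.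
-/

open Filter Set Topology

section Discriminant

theorem pos_iff_pos_of_discrim_neg {K : Type*} [CommRing K] [LinearOrder K] [IsStrictOrderedRing K]
    {a b c : K} (h : discrim a b c < 0) : 0 < a ↔ 0 < c := by
  have hac : 0 < a * c := by
    rw [discrim] at h
    linarith [sq_nonneg b]
  exact pos_iff_pos_of_mul_pos hac

theorem tendsto_discrim {K ι : Type*} [Ring K] [TopologicalSpace K] [IsTopologicalRing K]
    {l : Filter ι} {f g h : ι → K} {a b c : K}
    (hf : Tendsto f l (𝓝 a)) (hg : Tendsto g l (𝓝 b)) (hh : Tendsto h l (𝓝 c)) :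
    Tendsto (fun i ↦ discrim (f i) (g i) (h i)) l (𝓝 (discrim a b c)) :=
  (hg.pow 2).sub ((hf.const_mul 4).mul hh)

variable {γ R T ε : ℝ}

theorem discrim_limit_q1_q2_q3_neg (hγ : 1 < γ) (hR : R ≠ 0) (hT : T ≠ 0) (hε : ε ≠ 0) :
    discrim (ε / 2 * R * T) (-(R * T * ε)) (ε / 2 * γ * R * T) < 0 :=
  calc discrim (ε / 2 * R * T) (-(R * T * ε)) (ε / 2 * γ * R * T)
      = -((γ - 1) * (R * T * ε) ^ 2) := by rw [discrim]; ring
    _ < 0 := neg_lt_zero.2 (by positivity)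

theorem discrim_limit_q3_q5_q4_neg (hγ : 1 < γ) (hR : R ≠ 0) (hT : T ≠ 0) (hε : ε ≠ 0) :
    discrim (ε / 2 * γ * R * T) (-(ε * R)) (ε * R / (2 * (γ - 1) * T)) < 0 := by
  have hγ' : 0 < γ - 1 := sub_pos.2 hγ
  calc discrim (ε / 2 * γ * R * T) (-(ε * R)) (ε * R / (2 * (γ - 1) * T))
      = -((R * ε) ^ 2 / (γ - 1)) := by rw [discrim]; field_simp; ring
    _ < 0 := neg_lt_zero.2 (by positivity)

end Discriminant

theorem tendsto_comp_div_nhds_zero_of_isCompact {ι α : Type*} [TopologicalSpace α] {K : Set α}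
    (hK : IsCompact K) {A : α → ℝ} (hA : ContinuousOn A K) {l : Filter ι} {s : ι → α} {N : ι → ℝ}
    (hs : ∀ᶠ i in l, s i ∈ K) (hN : Tendsto N l atTop) :
    Tendsto (fun i ↦ A (s i) / N i) l (𝓝 0) := by
  obtain ⟨C, hC⟩ := hK.exists_bound_of_continuousOn hA
  exact tendsto_bdd_div_atTop_nhds_zero (hs.mono fun i hi ↦ (abs_le.1 (hC _ hi)).1)
    (hs.mono fun i hi ↦ (abs_le.1 (hC _ hi)).2) hN

section Bounds

variable {Γ θ φb β x : ℝ}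

theorem Sfun_mem_Icc (hΓ : 0 < Γ) (hθ : 0 < θ) (hφ : 0 < φb) (hθβ : θ ≤ β / (Γ * √φb))
    (hβ : β / (Γ * √φb) ≤ 1) (hx : 0 ≤ x) : Sfun β Γ φb x ∈ Icc 1 θ⁻¹ := by
  have hm : 0 < Γ * √φb := mul_pos hΓ (Real.sqrt_pos.2 hφ)
  have hβ₀ : 0 < β := (div_pos_iff_of_pos_right hm).1 (hθ.trans_le hθβ)
  have lower : (Γ * √φb)⁻¹ ≤ β⁻¹ := inv_anti₀ hβ₀ ((div_le_one hm).1 hβ)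
  have upper : β⁻¹ ≤ θ⁻¹ * (Γ * √φb)⁻¹ := by
    rw [← mul_inv]
    exact inv_anti₀ (mul_pos hθ hm) ((le_div_iff₀ hm).1 hθβ)
  have hxθ : x ≤ θ⁻¹ * x := le_mul_of_one_le_left hx ((one_le_inv₀ hθ).2 (hθβ.trans hβ))
  have hden : 0 < x + (Γ * √φb)⁻¹ := add_pos_of_nonneg_of_pos hx (inv_pos.2 hm)
  rw [Sfun, ← mul_inv, mem_Icc, one_le_div hden, div_le_iff₀ hden, mul_add]
  exact ⟨add_le_add_right lower x, add_le_add hxθ upper⟩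

theorem inv_le_Bfun_sq_mul_sq (hΓ : 0 < Γ) (hφ : 0 < φb) (hβ₀ : 0 < β)
    (hβ : β / (Γ * √φb) ≤ 1) (hx : 0 ≤ x) : φb⁻¹ ≤ Bfun β x ^ 2 * Γ ^ 2 := by
  have hm : 0 < Γ * √φb := mul_pos hΓ (Real.sqrt_pos.2 hφ)
  have hB : (Γ * √φb)⁻¹ ≤ Bfun β x :=
    (inv_anti₀ hβ₀ ((div_le_one hm).1 hβ)).trans (le_add_of_nonneg_left hx)
  calc φb⁻¹ = (Γ * √φb)⁻¹ ^ 2 * Γ ^ 2 := by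
        rw [inv_pow, mul_pow, Real.sq_sqrt hφ.le]
        field_simp
    _ ≤ Bfun β x ^ 2 * Γ ^ 2 := by gcongr

end Bounds

/-- The small-boundary-datum regime on triples `(φ_b, β, x₁)`: `φ_b` tends to `0` from the right,
while `β` and `x₁` range over all values with `0 < β`, `θ ≤ β / (Γ √φ_b) ≤ 1` and `0 ≤ x₁`.
Convergence along this filter is therefore uniform in `β` and `x₁`. -/
def degenerateRegime (Γ θ : ℝ) : Filter (ℝ × ℝ × ℝ) :=
  comap Prod.fst (𝓝[>] 0) ⊓ 𝓟 {z | 0 < z.2.1 ∧ θ ≤ z.2.1 / (Γ * √z.1) ∧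
    z.2.1 / (Γ * √z.1) ≤ 1 ∧ 0 ≤ z.2.2}

section Regime

variable {Γ θ : ℝ}

theorem eventually_degenerateRegime_iff {p : ℝ → ℝ → ℝ → Prop} :
    (∀ᶠ z in degenerateRegime Γ θ, p z.1 z.2.1 z.2.2) ↔
      ∃ δ > 0, ∀ φb β : ℝ, 0 < φb → φb ≤ δ → 0 < β → θ ≤ β / (Γ * √φb) →
        β / (Γ * √φb) ≤ 1 → ∀ x : ℝ, 0 ≤ x → p φb β x := by
  rw [degenerateRegime,
    (((nhdsGT_basis_Ioc (0 : ℝ)).comap Prod.fst).inf_principal _).eventually_iff]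
  constructor
  · rintro ⟨δ, hδ, h⟩
    exact ⟨δ, hδ, fun φb β hφ hφδ hβ₀ hθβ hβ x hx ↦
      h (x := (φb, β, x)) ⟨⟨hφ, hφδ⟩, hβ₀, hθβ, hβ, hx⟩⟩
  · rintro ⟨δ, hδ, h⟩
    exact ⟨δ, hδ, fun z ⟨⟨hφ, hφδ⟩, hβ₀, hθβ, hβ, hx⟩ ↦
      h z.1 z.2.1 hφ hφδ hβ₀ hθβ hβ z.2.2 hx⟩

theorem eventually_Sfun_mem_Icc (hΓ : 0 < Γ) (hθ : 0 < θ) :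
    ∀ᶠ z in degenerateRegime Γ θ, Sfun z.2.1 Γ z.1 z.2.2 ∈ Icc 1 θ⁻¹ :=
  eventually_degenerateRegime_iff.2 ⟨1, one_pos, fun _ _ hφ _ _ hθβ hβ _ hx ↦
    Sfun_mem_Icc hΓ hθ hφ hθβ hβ hx⟩

theorem tendsto_Bfun_sq_mul_sq_atTop (hΓ : 0 < Γ) :
    Tendsto (fun z ↦ Bfun z.2.1 z.2.2 ^ 2 * Γ ^ 2) (degenerateRegime Γ θ) atTop := by
  have hφ : Tendsto Prod.fst (degenerateRegime Γ θ) (𝓝[>] 0) := tendsto_comap.mono_left inf_le_left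
  refine tendsto_atTop_mono' _ ?_ (tendsto_inv_nhdsGT_zero.comp hφ)
  exact eventually_degenerateRegime_iff.2 ⟨1, one_pos, fun _ _ hφ _ hβ₀ _ hβ _ hx ↦
    inv_le_Bfun_sq_mul_sq hΓ hφ hβ₀ hβ hx⟩

theorem tendsto_const_add_comp_Sfun_div (hΓ : 0 < Γ) (hθ : 0 < θ) (c : ℝ) {A : ℝ → ℝ}
    (hA : ContinuousOn A (Icc 1 θ⁻¹)) :
    Tendsto (fun z ↦ c + A (Sfun z.2.1 Γ z.1 z.2.2) / (Bfun z.2.1 z.2.2 ^ 2 * Γ ^ 2))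
      (degenerateRegime Γ θ) (𝓝 c) := by
  simpa only [add_zero] using (tendsto_comp_div_nhds_zero_of_isCompact isCompact_Icc hA
    (eventually_Sfun_mem_Icc hΓ hθ) (tendsto_Bfun_sq_mul_sq_atTop hΓ)).const_add c

variable (γ R T ε : ℝ)

theorem tendsto_q1 (hΓ : 0 < Γ) (hθ : 0 < θ) :
    Tendsto (fun z ↦ q1 γ R T Γ ε z.2.1 z.1 z.2.2) (degenerateRegime Γ θ) (𝓝 (ε / 2 * R * T)) :=
  tendsto_const_add_comp_Sfun_div hΓ hθ _
    (A := fun s ↦ (1 - R * T) * ε / 2 * s ^ 2 - Γ ^ 2 / 2 * ε * (ε - 1) * (ε - 2)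
      + (γ * R * T - 1) * s ^ 3) (by fun_prop)

theorem tendsto_q2 (hΓ : 0 < Γ) (hθ : 0 < θ) :
    Tendsto (fun z ↦ q2 γ R T Γ ε z.2.1 z.1 z.2.2) (degenerateRegime Γ θ) (𝓝 (-(R * T * ε))) :=
  tendsto_const_add_comp_Sfun_div hΓ hθ _
    (A := fun s ↦ 2 * ε * R * T * s ^ 2 + 2 * (1 - γ * R * T) * s ^ 3) (by fun_prop)

theorem tendsto_q3 (hΓ : 0 < Γ) (hθ : 0 < θ) :
    Tendsto (fun z ↦ q3 γ R T Γ ε z.2.1 z.1 z.2.2) (degenerateRegime Γ θ)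
      (𝓝 (ε / 2 * γ * R * T)) :=
  tendsto_const_add_comp_Sfun_div hΓ hθ _
    (A := fun s ↦ (1 - R * T) * ε / 2 * s ^ 2 + (3 * γ * R * T + 3) * s ^ 3) (by fun_prop)

theorem tendsto_q4 (hΓ : 0 < Γ) (hθ : 0 < θ) :
    Tendsto (fun z ↦ q4 γ R T Γ ε z.2.1 z.1 z.2.2) (degenerateRegime Γ θ)
      (𝓝 (ε * R / (2 * (γ - 1) * T))) :=
  tendsto_const_add_comp_Sfun_div hΓ hθ _
    (A := fun s ↦ -(ε * R / (2 * (γ - 1) * T)) * s ^ 2 + γ * R / ((γ - 1) * T) * s ^ 3)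
    (by fun_prop)

theorem tendsto_q5 (hΓ : 0 < Γ) (hθ : 0 < θ) :
    Tendsto (fun z ↦ q5 γ R T Γ ε z.2.1 z.1 z.2.2) (degenerateRegime Γ θ) (𝓝 (-(ε * R))) :=
  tendsto_const_add_comp_Sfun_div hΓ hθ _ (A := fun s ↦ 2 * ε * R * s ^ 2) (by fun_prop)

end Regime

theorem degenerate_coefficients_signs_general
    (γ R T Γ ε θ : ℝ)
    (hγ : 1 < γ) (hR : 0 < R) (hT : 0 < T) (hΓ : 0 < Γ) (hε : 0 < ε) (hθ : 0 < θ) :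
    ∃ δ > 0, ∀ φb β : ℝ, 0 < φb → φb ≤ δ → 0 < β →
      θ ≤ β / (Γ * Real.sqrt φb) → β / (Γ * Real.sqrt φb) ≤ 1 →
      ∀ x : ℝ, 0 ≤ x →
        0 < q1 γ R T Γ ε β φb x ∧
        0 < q3 γ R T Γ ε β φb x ∧
        0 < q4 γ R T Γ ε β φb x ∧
        (q2 γ R T Γ ε β φb x) ^ 2
            - 4 * q1 γ R T Γ ε β φb x * q3 γ R T Γ ε β φb x < 0 ∧
        (q5 γ R T Γ ε β φb x) ^ 2
            - 4 * q3 γ R T Γ ε β φb x * q4 γ R T Γ ε β φb x < 0 := by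
  have h1 := tendsto_q1 γ R T ε hΓ hθ
  have h2 := tendsto_q2 γ R T ε hΓ hθ
  have h3 := tendsto_q3 γ R T ε hΓ hθ
  have h4 := tendsto_q4 γ R T ε hΓ hθ
  have h5 := tendsto_q5 γ R T ε hΓ hθ
  have limit3_pos : 0 < ε / 2 * γ * R * T := by positivity
  have limit123_neg := discrim_limit_q1_q2_q3_neg hγ hR.ne' hT.ne' hε.ne'
  have limit354_neg := discrim_limit_q3_q5_q4_neg hγ hR.ne' hT.ne' hε.ne'
  refine eventually_degenerateRegime_iff.1 ?_
  filter_upwards [h3.eventually_const_lt limit3_pos,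
    (tendsto_discrim h1 h2 h3).eventually_lt_const limit123_neg,
    (tendsto_discrim h3 h5 h4).eventually_lt_const limit354_neg]
    with z q3_pos disc123 disc354
  exact ⟨(pos_iff_pos_of_discrim_neg disc123).2 q3_pos, q3_pos,
    (pos_iff_pos_of_discrim_neg disc354).1 q3_pos, disc123, disc354⟩

/-- Positivity and discriminant conditions (paper eqs. (44)–(45)) for the coefficient
functions `q₁,…,q₅` of the degenerate-case quadratic form, valid for all `x₁ ≥ 0`
once the boundary datum `φ_b` is small enough. -/
theorem degenerate_coefficients_signs
    (γ R T Γ l₀ ε θ : ℝ)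
    (hγ : 1 < γ) (hR : 0 < R) (hT : 0 < T)
    (hΓ : Γ = Real.sqrt (((γ ^ 2 + γ) * R * T + 2) / 12))
    (hl₀ : 4 < l₀)
    (hl₀root : l₀ * (l₀ - 1) * (l₀ - 2) - 12 * (2 * l₀ / (1 + γ) + 2) = 0)
    (hε4 : 4 ≤ ε) (hεl : ε < l₀)
    (hθ : 0 < θ) (hθ1 : θ ≤ 1) :
    ∃ δ > 0, ∀ φb β : ℝ, 0 < φb → φb ≤ δ → 0 < β →
      θ ≤ β / (Γ * Real.sqrt φb) → β / (Γ * Real.sqrt φb) ≤ 1 →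
      ∀ x : ℝ, 0 ≤ x →
        0 < q1 γ R T Γ ε β φb x ∧
        0 < q3 γ R T Γ ε β φb x ∧
        0 < q4 γ R T Γ ε β φb x ∧
        (q2 γ R T Γ ε β φb x) ^ 2
            - 4 * q1 γ R T Γ ε β φb x * q3 γ R T Γ ε β φb x < 0 ∧
        (q5 γ R T Γ ε β φb x) ^ 2
            - 4 * q3 γ R T Γ ε β φb x * q4 γ R T Γ ε β φb x < 0 := by
  have hΓ₀ : 0 < Γ := hΓ ▸ Real.sqrt_pos.2 (by positivity)
  exact degenerate_coefficients_signs_general γ R T Γ ε θ hγ hR hT hΓ₀ (by linarith) hθ
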